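/- For all positive integers a and n, ν_5( C(5^a n, n)_F ) = ν_5( binomial(5^a n, n) ) = s_5((5^a − 1)n)/4. In particular, 5 divides C(5^a n, n)_F for all positive integers a and n. -/

import Mathlib

/-!
The Fibonacci numbers satisfy `ν₅(F_n) = ν₅(n)` for `n > 0`: `5 ∣ F_n` exactly when `5 ∣ n`, and
the quintuplication formula `F_{5m} = 5 F_m (5 F_m⁴ + 5 (-1)^m F_m² + 1)` shows that multiplying
the index by `5` raises the valuation by exactly one. Hence the Fibonacci factorial
`F_1 ⋯ F_n` has the same `5`-adic valuation as `n!`, so the Fibonomial and the ordinary binomial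
coefficients have equal `5`-adic valuations (`padicValNat_fibBinom`).

For the digit sum, Legendre's formula gives
`4 ν₅ (binomial(m, n)) = s₅(n) + s₅(m - n) - s₅(m)`; for `m = 5^a n` the first and the last term
cancel, as multiplication by `5^a` only appends zeros. The remaining digit sum is that of a
positive integer, so the valuation is positive.
-/

/-- The Fibonomial coefficient `C(m,k)_F = (F_{m-k+1} ⋯ F_m)/(F_1 ⋯ F_k)`,
with `C(m,0)_F = 1` and `C(m,k)_F = 0` for `k > m`. -/
def fibBinom (m k : ℕ) : ℕ :=
  (∏ i ∈ Finset.range k, Nat.fib (m - i)) / ∏ i ∈ Finset.range k, Nat.fib (i + 1)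

/-- The rank of appearance `z(n)`: the least positive `m` with `n ∣ F_m`. -/
noncomputable def fibRank (n : ℕ) : ℕ := sInf {m : ℕ | 0 < m ∧ n ∣ Nat.fib m}

/-- The sum of the digits of `n` in base `q`. -/
def digitSum (q n : ℕ) : ℕ := (Nat.digits q n).sum

/-- The Fibonacci factorial `F_1 F_2 ⋯ F_n`. -/
def fibFact (n : ℕ) : ℕ := ∏ i ∈ Finset.range n, Nat.fib (i + 1)

theorem fibFact_succ (n : ℕ) : fibFact (n + 1) = fibFact n * Nat.fib (n + 1) :=
  Finset.prod_range_succ _ _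

theorem fibFact_pos (n : ℕ) : 0 < fibFact n :=
  Finset.prod_pos fun i _ => Nat.fib_pos.2 i.succ_pos

/-- Integrality of the Fibonomial coefficients, by the Pascal-type recurrence coming from
`F_{r+k+2} = F_{r+1} F_k + F_{r+2} F_{k+1}`. -/
theorem fibFact_mul_dvd (r k : ℕ) : fibFact r * fibFact k ∣ fibFact (r + k) := by
  induction r generalizing k with
  | zero => simp [fibFact]
  | succ r ihr =>
    induction k with
    | zero => simp [fibFact]
    | succ k ihk =>
      have e : Nat.fib (r + k + 1 + 1)
          = Nat.fib (r + 1) * Nat.fib k + Nat.fib (r + 2) * Nat.fib (k + 1) := by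
        rw [← Nat.fib_add (r + 1) k]
        congr 1
        ring
      have h1 := ihr (k + 1)
      have h2 := ihk
      rw [show r + (k + 1) = r + k + 1 by ring] at h1
      rw [show r + 1 + k = r + k + 1 by ring] at h2
      rw [show r + 1 + (k + 1) = r + k + 1 + 1 by ring, fibFact_succ (r + k + 1), e, mul_add]
      refine dvd_add ?_ ?_
      · rw [fibFact_succ r, mul_right_comm, ← mul_assoc]
        exact (Nat.mul_dvd_mul_right h1 _).mul_right _
      · rw [fibFact_succ k, ← mul_assoc, mul_comm (Nat.fib (r + 2)), ← mul_assoc]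
        exact (Nat.mul_dvd_mul_right h2 _).mul_right _

theorem prod_fib_sub_mul_fibFact (r k : ℕ) :
    (∏ i ∈ Finset.range k, Nat.fib (r + k - i)) * fibFact r = fibFact (r + k) := by
  induction k with
  | zero => simp
  | succ k ih =>
    rw [Finset.prod_range_succ', ← add_assoc, fibFact_succ, ← ih]
    simp only [Nat.add_sub_add_right, Nat.sub_zero]
    ring

theorem fibBinom_mul (r k : ℕ) :
    fibBinom (r + k) k * fibFact k * fibFact r = fibFact (r + k) := by
  have h : fibFact k ∣ ∏ i ∈ Finset.range k, Nat.fib (r + k - i) := by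
    apply Nat.dvd_of_mul_dvd_mul_right (fibFact_pos r)
    rw [prod_fib_sub_mul_fibFact, mul_comm]
    exact fibFact_mul_dvd r k
  rw [← prod_fib_sub_mul_fibFact]
  congr 1
  exact Nat.div_mul_cancel h

/-- Cassini's identity, squared to avoid the sign `(-1)^m`. -/
theorem cassini_sq (m : ℕ) :
    (((Nat.fib (m + 1) : ℤ)) ^ 2 - Nat.fib (m + 1) * Nat.fib m - (Nat.fib m : ℤ) ^ 2) ^ 2 = 1 := by
  induction m with
  | zero => simp
  | succ m ih =>
    rw [← ih, Nat.fib_add_two]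
    push_cast
    ring

/-- Quintuplication formula; `c` is `F_m⁴ + (-1)^m F_m²`. -/
theorem exists_fib_five_mul (m : ℕ) :
    ∃ c : ℤ, (Nat.fib (5 * m) : ℤ) = 5 * Nat.fib m * (5 * c + 1) := by
  have e1 : (Nat.fib (m + m + 1) : ℤ) = Nat.fib m ^ 2 + Nat.fib (m + 1) ^ 2 := by
    rw [Nat.fib_add]; push_cast; ring
  have e0 : (Nat.fib (m + m) : ℤ) = Nat.fib m * (2 * Nat.fib (m + 1) - Nat.fib m) := by
    cases m with
    | zero => simp
    | succ k =>
      rw [show k + 1 + (k + 1) = k + 1 + k + 1 by ring, Nat.fib_add, Nat.fib_add_two]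
      push_cast; ring
  have f1 : (Nat.fib (2 * (m + m) + 1) : ℤ)
      = Nat.fib (m + m) ^ 2 + Nat.fib (m + m + 1) ^ 2 := by
    rw [two_mul, Nat.fib_add]; push_cast; ring
  have f0 : (Nat.fib (2 * (m + m)) : ℤ)
      = Nat.fib (m + m) * (2 * Nat.fib (m + m + 1) - Nat.fib (m + m)) := by
    rw [two_mul]
    generalize m + m = q
    cases q with
    | zero => simp
    | succ k =>
      rw [show k + 1 + (k + 1) = k + 1 + k + 1 by ring, Nat.fib_add, Nat.fib_add_two]
      push_cast; ring
  have g : (Nat.fib (5 * m) : ℤ) = Nat.fib (2 * (m + m)) * (Nat.fib (m + 1) - Nat.fib m)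
      + Nat.fib (2 * (m + m) + 1) * Nat.fib m := by
    cases m with
    | zero => simp
    | succ k =>
      rw [show 5 * (k + 1) = 2 * (k + 1 + (k + 1)) + k + 1 by ring, Nat.fib_add, Nat.fib_add_two]
      push_cast; ring
  have hc := cassini_sq m
  rw [g, f0, f1, e0, e1]
  generalize (Nat.fib m : ℤ) = x at *
  generalize (Nat.fib (m + 1) : ℤ) = y at *
  refine ⟨x ^ 4 + (y ^ 2 - y * x - x ^ 2) * x ^ 2, ?_⟩
  linear_combination (5 * x) * hc

theorem five_dvd_fib_iff (n : ℕ) : 5 ∣ Nat.fib n ↔ 5 ∣ n := by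
  have h5 : Nat.fib 5 = 5 := by decide
  constructor
  · intro h
    have hg : Nat.fib (Nat.gcd 5 n) = 5 := by
      rw [Nat.fib_gcd, h5]
      exact Nat.gcd_eq_left h
    rcases (Nat.dvd_prime Nat.prime_five).1 (Nat.gcd_dvd_left 5 n) with h1 | h1
    · simp [h1] at hg
    · exact Nat.gcd_eq_left_iff_dvd.1 h1
  · intro h
    have := Nat.fib_dvd 5 n h
    rwa [h5] at this

theorem padicValNat_five_fib (n : ℕ) : padicValNat 5 (Nat.fib n) = padicValNat 5 n := by
  have : Fact (Nat.Prime 5) := ⟨Nat.prime_five⟩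
  induction n using Nat.strong_induction_on with
  | _ n ih =>
    by_cases h : 5 ∣ n
    · obtain ⟨m, rfl⟩ := h
      rcases Nat.eq_zero_or_pos m with rfl | hm
      · simp
      obtain ⟨c, hc⟩ := exists_fib_five_mul m
      have hF : 0 < Nat.fib m := Nat.fib_pos.2 hm
      -- The cofactor `5 * c + 1` is positive, so it is a natural number prime to `5`.
      have hpos : 0 < 5 * c + 1 := by
        have h1 : (0 : ℤ) < Nat.fib (5 * m) := by
          exact_mod_cast Nat.fib_pos.2 (by omega : 0 < 5 * m)
        rw [hc] at h1
        exact pos_of_mul_pos_right h1 (by positivity)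
      obtain ⟨d, hd⟩ := Int.eq_ofNat_of_zero_le hpos.le
      have hdn : ¬ 5 ∣ d := by omega
      have hd0 : d ≠ 0 := by omega
      have e : Nat.fib (5 * m) = 5 * Nat.fib m * d := by
        rw [hd] at hc
        exact_mod_cast hc
      rw [e, padicValNat.mul (by positivity) hd0, padicValNat.mul (by norm_num) hF.ne',
        padicValNat.mul (by norm_num) hm.ne', ih m (by omega),
        padicValNat.eq_zero_of_not_dvd hdn, add_zero]
    · rw [padicValNat.eq_zero_of_not_dvd h,
        padicValNat.eq_zero_of_not_dvd (mt (five_dvd_fib_iff n).1 h)]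

theorem padicValNat_fibFact (n : ℕ) :
    padicValNat 5 (fibFact n) = padicValNat 5 n.factorial := by
  have : Fact (Nat.Prime 5) := ⟨Nat.prime_five⟩
  induction n with
  | zero => simp [fibFact]
  | succ n ih =>
    rw [fibFact_succ, Nat.factorial_succ, padicValNat.mul (fibFact_pos n).ne' (by simp),
      padicValNat.mul n.succ_ne_zero n.factorial_ne_zero, ih, padicValNat_five_fib, add_comm]

theorem padicValNat_fibBinom (r k : ℕ) :
    padicValNat 5 (fibBinom (r + k) k) = padicValNat 5 (Nat.choose (r + k) k) := by
  have : Fact (Nat.Prime 5) := ⟨Nat.prime_five⟩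
  have h0 : fibBinom (r + k) k ≠ 0 := fun h => by
    have := fibBinom_mul r k
    rw [h] at this
    have := fibFact_pos (r + k)
    omega
  have h1 := congrArg (padicValNat 5) (fibBinom_mul r k)
  have h2 := congrArg (padicValNat 5) (Nat.choose_mul_factorial_mul_factorial (Nat.le_add_left k r))
  rw [Nat.add_sub_cancel] at h2
  rw [padicValNat.mul (mul_ne_zero h0 (fibFact_pos k).ne') (fibFact_pos r).ne',
    padicValNat.mul h0 (fibFact_pos k).ne'] at h1
  have hch : Nat.choose (r + k) k ≠ 0 := (Nat.choose_pos (Nat.le_add_left k r)).ne'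
  rw [padicValNat.mul (mul_ne_zero hch k.factorial_ne_zero) r.factorial_ne_zero,
    padicValNat.mul hch k.factorial_ne_zero] at h2
  simp only [padicValNat_fibFact] at h1
  omega

theorem fibonomial_five_adic_valuation (a n : ℕ) (ha : 0 < a) (hn : 0 < n) :
    padicValNat 5 (fibBinom (5 ^ a * n) n)
        = padicValNat 5 (Nat.choose (5 ^ a * n) n) ∧
    4 * padicValNat 5 (fibBinom (5 ^ a * n) n) = digitSum 5 ((5 ^ a - 1) * n) ∧
    5 ∣ fibBinom (5 ^ a * n) n := by
  have : Fact (Nat.Prime 5) := ⟨Nat.prime_five⟩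
  have hpow : 1 < 5 ^ a := Nat.one_lt_pow ha.ne' (by norm_num)
  have hle : n ≤ 5 ^ a * n := Nat.le_mul_of_pos_left n (by omega)
  have hsub : (5 ^ a - 1) * n = 5 ^ a * n - n := by rw [Nat.sub_mul, one_mul]
  have h1 : padicValNat 5 (fibBinom (5 ^ a * n) n)
      = padicValNat 5 (Nat.choose (5 ^ a * n) n) := by
    have := padicValNat_fibBinom (5 ^ a * n - n) n
    rwa [Nat.sub_add_cancel hle] at this
  have h2 : 4 * padicValNat 5 (fibBinom (5 ^ a * n) n) = digitSum 5 ((5 ^ a - 1) * n) := by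
    have h := sub_one_mul_padicValNat_choose_eq_sub_sum_digits (p := 5) hle
    rw [Nat.digits_base_pow_mul (by norm_num) hn, List.sum_append, List.sum_replicate,
      ← hsub] at h
    rw [h1, digitSum]
    simp only [smul_zero, zero_add] at h
    omega
  refine ⟨h1, h2, ?_⟩
  have hpos : 0 < (5 ^ a - 1) * n := Nat.mul_pos (by omega) hn
  -- A vanishing digit sum would force the number itself to vanish.
  have hs : digitSum 5 ((5 ^ a - 1) * n) ≠ 0 := by
    intro h0
    rw [digitSum, List.sum_eq_zero_iff] at h0
    have hne : Nat.digits 5 ((5 ^ a - 1) * n) ≠ [] := Nat.digits_ne_nil_iff_ne_zero.2 hpos.ne'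
    exact Nat.getLast_digit_ne_zero 5 hpos.ne' (h0 _ (List.getLast_mem hne))
  exact dvd_of_one_le_padicValNat (by omega)
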